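/- Let u(y,t) = ∫_{ℝⁿ} K(y,z,t) u₀(z) dz, where K is the Euclidean heat kernel on ℝⁿ and u₀ : ℝⁿ → ℝ is continuous, compactly supported, nonnegative, and not identically zero. Then for every y ∈ ℝⁿ and t > 0, the symmetric matrix ∇² log u(y,t) + (1/(2t)) I is positive semidefinite. -/

import Mathlib

/-
Expanding the square in the heat kernel gives
  `K(x, z, t) = exp (-‖x‖² / (4t)) * exp ⟪x, z / (2t)⟫ * K(0, z, t)`,
so `log u(x, t) + ‖x‖² / (4t)` is the cumulant generating function of `z / (2t)` under the measure
`K(0, z, t) u₀(z) dz`. The Hessian of a cumulant generating function at `x` is the covariance matrix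
under the measure tilted by `x`, hence positive semidefinite, while the Hessian of `‖x‖² / (4t)` is
`I / (2t)`.
-/

open Real MeasureTheory Filter Set

/-- The Euclidean heat kernel on ℝⁿ. -/
noncomputable def heatK (n : ℕ) (x y : EuclideanSpace ℝ (Fin n)) (t : ℝ) : ℝ :=
  (4 * π * t) ^ (-(n : ℝ) / 2) * Real.exp (-‖x - y‖ ^ 2 / (4 * t))

/-- `i`-th partial derivative of `f : ℝⁿ → ℝ`. -/
noncomputable def pdv {n : ℕ} (i : Fin n) (f : EuclideanSpace ℝ (Fin n) → ℝ)
    (y : EuclideanSpace ℝ (Fin n)) : ℝ :=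
  fderiv ℝ f y (EuclideanSpace.single i 1)

/-- `(i,j)` entry of the Hessian of `f : ℝⁿ → ℝ`. -/
noncomputable def hess {n : ℕ} (i j : Fin n) (f : EuclideanSpace ℝ (Fin n) → ℝ)
    (y : EuclideanSpace ℝ (Fin n)) : ℝ :=
  pdv i (pdv j f) y

lemma hasFDerivAt_fun_div {𝕜 V : Type*} [NontriviallyNormedField 𝕜] [NormedAddCommGroup V]
    [NormedSpace 𝕜 V] {f g : V → 𝕜} {f' g' : V →L[𝕜] 𝕜} {x : V} (hf : HasFDerivAt f f' x)
    (hg : HasFDerivAt g g' x) (hgx : g x ≠ 0) :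
    HasFDerivAt (fun y => f y / g y) ((g x ^ 2)⁻¹ • (g x • f' - f x • g')) x := by
  simp only [div_eq_mul_inv]
  refine (hf.mul ((hasDerivAt_inv hgx).comp_hasFDerivAt x hg)).congr_fderiv ?_
  ext v
  simp only [Function.comp_apply, _root_.add_apply, _root_.sub_apply, _root_.smul_apply,
    smul_eq_mul]
  field_simp
  ring

section VectorCGF

open ProbabilityTheory
open scoped RealInnerProductSpace

variable {Ω E : Type*} {mΩ : MeasurableSpace Ω} {μ : Measure Ω}
  [NormedAddCommGroup E] [InnerProductSpace ℝ E]

lemma exp_inner_mul_norm_le (x z : E) :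
    Real.exp ⟪x, z⟫ * ‖z‖ ≤ Real.exp ((‖x‖ + 1) * ‖z‖) := by
  have hz : ‖z‖ ≤ Real.exp ‖z‖ := (lt_add_one _).le.trans (Real.add_one_le_exp _)
  rw [add_mul, one_mul, Real.exp_add]
  gcongr
  exact real_inner_le_norm x z

-- Expanding the product, over the coordinates `a`, of `exp |a| ≤ exp a + exp (-a)`.
lemma exp_mul_norm_le_sum_exp_inner {ι : Type*} [Fintype ι] [DecidableEq ι]
    (b : OrthonormalBasis ι ℝ E) {r : ℝ} (hr : 0 ≤ r) (z : E) :
    Real.exp (r * ‖z‖) ≤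
      ∑ s : Finset ι, Real.exp ⟪r • (∑ i ∈ s, b i - ∑ i ∈ sᶜ, b i), z⟫ := by
  have norm_le : ‖z‖ ≤ ∑ i, |⟪b i, z⟫| := by
    calc ‖z‖ = ‖∑ i, ⟪b i, z⟫ • b i‖ := by rw [b.sum_repr']
      _ ≤ ∑ i, |⟪b i, z⟫| := by
        simpa [norm_smul] using norm_sum_le Finset.univ fun i => ⟪b i, z⟫ • b i
  calc Real.exp (r * ‖z‖) ≤ Real.exp (∑ i, |r * ⟪b i, z⟫|) := by
        simp only [abs_mul, abs_of_nonneg hr, ← Finset.mul_sum]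
        gcongr
    _ = ∏ i, Real.exp |r * ⟪b i, z⟫| := Real.exp_sum _ _
    _ ≤ ∏ i, (Real.exp (r * ⟪b i, z⟫) + Real.exp (-(r * ⟪b i, z⟫))) := by
        gcongr with i
        exact Real.exp_abs_le _
    _ = ∑ s : Finset ι, Real.exp ⟪r • (∑ i ∈ s, b i - ∑ i ∈ sᶜ, b i), z⟫ := by
        rw [Finset.prod_add, Finset.powerset_univ]
        refine Finset.sum_congr rfl fun s _ => ?_
        rw [← Real.exp_sum, ← Real.exp_sum, ← Real.exp_add, ← Finset.compl_eq_univ_sdiff]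
        simp only [real_inner_smul_left, inner_sub_left, sum_inner, Finset.sum_neg_distrib,
          ← Finset.mul_sum]
        ring_nf

section Integral

variable {X : Ω → E} {φ : Ω → ℝ}

lemma aestronglyMeasurable_of_integrable_exp_inner_mul
    (hφ : ∀ x, Integrable (fun ω => Real.exp ⟪x, X ω⟫ * φ ω) μ) : AEStronglyMeasurable φ μ := by
  simpa using (hφ 0).aestronglyMeasurable

variable [FiniteDimensional ℝ E]

lemma integrable_exp_mul_norm_mul (hX : AEStronglyMeasurable X μ)
    (hφ : ∀ x, Integrable (fun ω => Real.exp ⟪x, X ω⟫ * φ ω) μ) {r : ℝ} (hr : 0 ≤ r) :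
    Integrable (fun ω => Real.exp (r * ‖X ω‖) * φ ω) μ := by
  classical
  let b := stdOrthonormalBasis ℝ E
  have hφm := aestronglyMeasurable_of_integrable_exp_inner_mul hφ
  have hsum : Integrable (fun ω => ∑ s : Finset _,
      ‖Real.exp ⟪r • (∑ i ∈ s, b i - ∑ i ∈ sᶜ, b i), X ω⟫ * φ ω‖) μ :=
    integrable_finsetSum _ fun s _ => (hφ _).norm
  refine hsum.mono' (by fun_prop) (ae_of_all _ fun ω => ?_)
  simp only [norm_mul, Real.norm_eq_abs, Real.abs_exp, ← Finset.sum_mul]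
  gcongr
  exact exp_mul_norm_le_sum_exp_inner b hr (X ω)

lemma integrable_exp_inner_mul_smul (hX : AEStronglyMeasurable X μ)
    (hφ : ∀ x, Integrable (fun ω => Real.exp ⟪x, X ω⟫ * φ ω) μ) (x : E) :
    Integrable (fun ω => (Real.exp ⟪x, X ω⟫ * φ ω) • X ω) μ := by
  have hdom := (integrable_exp_mul_norm_mul hX hφ (r := ‖x‖ + 1) (by positivity)).norm
  refine hdom.mono' ((hφ x).aestronglyMeasurable.smul hX) (ae_of_all _ fun ω => ?_)
  simp only [norm_smul, norm_mul, Real.norm_eq_abs, Real.abs_exp]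
  calc Real.exp ⟪x, X ω⟫ * |φ ω| * ‖X ω‖ = Real.exp ⟪x, X ω⟫ * ‖X ω‖ * |φ ω| := by ring
    _ ≤ Real.exp ((‖x‖ + 1) * ‖X ω‖) * |φ ω| := by
      gcongr
      exact exp_inner_mul_norm_le x (X ω)

lemma integrable_exp_inner_mul_mul_inner (hX : AEStronglyMeasurable X μ)
    (hφ : ∀ x, Integrable (fun ω => Real.exp ⟪x, X ω⟫ * φ ω) μ) (v x : E) :
    Integrable (fun ω => Real.exp ⟪x, X ω⟫ * (φ ω * ⟪v, X ω⟫)) μ := by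
  simpa only [real_inner_smul_right, mul_assoc] using
    (integrable_exp_inner_mul_smul hX hφ x).const_inner (𝕜 := ℝ) v

lemma hasFDerivAt_integral_exp_inner_mul (hX : AEStronglyMeasurable X μ)
    (hφ : ∀ x, Integrable (fun ω => Real.exp ⟪x, X ω⟫ * φ ω) μ) (x : E) :
    HasFDerivAt (fun x => ∫ ω, Real.exp ⟪x, X ω⟫ * φ ω ∂μ)
      (innerSL ℝ (∫ ω, (Real.exp ⟪x, X ω⟫ * φ ω) • X ω ∂μ)) x := by
  rw [← (innerSL ℝ).integral_comp_comm (integrable_exp_inner_mul_smul hX hφ x)]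
  simp only [map_smul]
  have hdom := (integrable_exp_mul_norm_mul hX hφ (r := ‖x‖ + 1 + 1) (by positivity)).norm
  refine hasFDerivAt_integral_of_dominated_of_fderiv_le
    (F' := fun x ω => (Real.exp ⟪x, X ω⟫ * φ ω) • innerSL ℝ (X ω)) (Metric.ball_mem_nhds x one_pos)
    (.of_forall fun y => (hφ y).aestronglyMeasurable) (hφ x)
    ((hφ x).aestronglyMeasurable.smul ((innerSL ℝ).continuous.comp_aestronglyMeasurable hX))
    (ae_of_all _ fun ω y hy => ?_) hdom (ae_of_all _ fun ω y _ => ?_)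
  · have hy' : ‖y‖ ≤ ‖x‖ + 1 := (norm_lt_of_mem_ball hy).le
    simp only [norm_smul, norm_mul, innerSL_apply_norm, Real.norm_eq_abs, Real.abs_exp]
    calc Real.exp ⟪y, X ω⟫ * |φ ω| * ‖X ω‖ = Real.exp ⟪y, X ω⟫ * ‖X ω‖ * |φ ω| := by ring
      _ ≤ Real.exp ((‖x‖ + 1 + 1) * ‖X ω‖) * |φ ω| := by
        gcongr
        exact (exp_inner_mul_norm_le y (X ω)).trans (by gcongr)
  · have hinner : HasFDerivAt (fun y => ⟪y, X ω⟫) (innerSL ℝ (X ω)) y := by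
      simpa only [coe_innerSL_apply, real_inner_comm] using (innerSL ℝ (X ω)).hasFDerivAt (x := y)
    exact (hinner.exp.mul_const (φ ω)).congr_fderiv (by rw [smul_smul, mul_comm])

lemma differentiable_integral_exp_inner_mul (hX : AEStronglyMeasurable X μ)
    (hφ : ∀ x, Integrable (fun ω => Real.exp ⟪x, X ω⟫ * φ ω) μ) :
    Differentiable ℝ fun x => ∫ ω, Real.exp ⟪x, X ω⟫ * φ ω ∂μ :=
  fun x => (hasFDerivAt_integral_exp_inner_mul hX hφ x).differentiableAt

lemma fderiv_integral_exp_inner_mul_apply (hX : AEStronglyMeasurable X μ)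
    (hφ : ∀ x, Integrable (fun ω => Real.exp ⟪x, X ω⟫ * φ ω) μ) (x v : E) :
    fderiv ℝ (fun x => ∫ ω, Real.exp ⟪x, X ω⟫ * φ ω ∂μ) x v =
      ∫ ω, Real.exp ⟪x, X ω⟫ * (φ ω * ⟪v, X ω⟫) ∂μ := by
  rw [(hasFDerivAt_integral_exp_inner_mul hX hφ x).fderiv, innerSL_apply_apply, real_inner_comm,
    ← integral_inner (integrable_exp_inner_mul_smul hX hφ x)]
  simp only [real_inner_smul_right, mul_assoc]

end Integral

lemma integral_tilted_eq_div (f g : Ω → ℝ) :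
    ∫ ω, g ω ∂μ.tilted f = (∫ ω, Real.exp (f ω) * g ω ∂μ) / ∫ ω, Real.exp (f ω) ∂μ := by
  simp only [integral_tilted, smul_eq_mul, div_mul_eq_mul_div, integral_div]

/-- The cumulant generating function `x ↦ log ∫ exp ⟪x, X⟫ ∂μ` of a random vector `X`, the
multivariate analogue of `ProbabilityTheory.cgf`. -/
noncomputable def vectorCGF (X : Ω → E) (μ : Measure Ω) (x : E) : ℝ :=
  Real.log (∫ ω, Real.exp ⟪x, X ω⟫ ∂μ)

section CGF

variable [FiniteDimensional ℝ E] {X : Ω → E}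

lemma integrable_exp_inner_mul_inner (hX : AEStronglyMeasurable X μ)
    (hexp : ∀ x, Integrable (fun ω => Real.exp ⟪x, X ω⟫) μ) (v x : E) :
    Integrable (fun ω => Real.exp ⟪x, X ω⟫ * ⟪v, X ω⟫) μ := by
  simpa using integrable_exp_inner_mul_mul_inner (φ := 1) hX (by simpa using hexp) v x

lemma memLp_two_inner_tilted (hX : AEStronglyMeasurable X μ)
    (hexp : ∀ x, Integrable (fun ω => Real.exp ⟪x, X ω⟫) μ) (v x : E) :
    MemLp (fun ω => ⟪v, X ω⟫) 2 (μ.tilted fun ω => ⟪x, X ω⟫) := by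
  have hm : AEStronglyMeasurable (fun ω => ⟪v, X ω⟫) (μ.tilted fun ω => ⟪x, X ω⟫) :=
    (hX.const_inner).mono_ac (tilted_absolutelyContinuous _ _)
  rw [memLp_two_iff_integrable_sq hm, integrable_tilted_iff (hexp x)]
  simpa only [smul_eq_mul, sq] using
    integrable_exp_inner_mul_mul_inner hX (integrable_exp_inner_mul_inner hX hexp v) v x

lemma differentiable_integral_exp_inner (hX : AEStronglyMeasurable X μ)
    (hexp : ∀ x, Integrable (fun ω => Real.exp ⟪x, X ω⟫) μ) :
    Differentiable ℝ fun x => ∫ ω, Real.exp ⟪x, X ω⟫ ∂μ := by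
  simpa using differentiable_integral_exp_inner_mul (φ := 1) hX (by simpa using hexp)

lemma fderiv_integral_exp_inner_apply (hX : AEStronglyMeasurable X μ)
    (hexp : ∀ x, Integrable (fun ω => Real.exp ⟪x, X ω⟫) μ) (x v : E) :
    fderiv ℝ (fun x => ∫ ω, Real.exp ⟪x, X ω⟫ ∂μ) x v =
      ∫ ω, Real.exp ⟪x, X ω⟫ * ⟪v, X ω⟫ ∂μ := by
  simpa using fderiv_integral_exp_inner_mul_apply (φ := 1) hX (by simpa using hexp) x v

variable [NeZero μ]

lemma differentiable_vectorCGF (hX : AEStronglyMeasurable X μ)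
    (hexp : ∀ x, Integrable (fun ω => Real.exp ⟪x, X ω⟫) μ) :
    Differentiable ℝ (vectorCGF X μ) :=
  (differentiable_integral_exp_inner hX hexp).log fun x => (integral_exp_pos (hexp x)).ne'

lemma fderiv_vectorCGF_apply (hX : AEStronglyMeasurable X μ)
    (hexp : ∀ x, Integrable (fun ω => Real.exp ⟪x, X ω⟫) μ) (x v : E) :
    fderiv ℝ (vectorCGF X μ) x v = ∫ ω, ⟪v, X ω⟫ ∂μ.tilted fun ω => ⟪x, X ω⟫ := by
  unfold vectorCGF
  rw [fderiv.log (differentiable_integral_exp_inner hX hexp x) (integral_exp_pos (hexp x)).ne',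
    _root_.smul_apply, fderiv_integral_exp_inner_apply hX hexp, integral_tilted_eq_div,
    smul_eq_mul, inv_mul_eq_div]

lemma differentiable_fderiv_vectorCGF_apply (hX : AEStronglyMeasurable X μ)
    (hexp : ∀ x, Integrable (fun ω => Real.exp ⟪x, X ω⟫) μ) (w : E) :
    Differentiable ℝ fun x => fderiv ℝ (vectorCGF X μ) x w := by
  simp only [fderiv_vectorCGF_apply hX hexp, integral_tilted_eq_div]
  exact fun x => (hasFDerivAt_fun_div
    (differentiable_integral_exp_inner_mul hX (integrable_exp_inner_mul_inner hX hexp w)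
      x).hasFDerivAt (differentiable_integral_exp_inner hX hexp x).hasFDerivAt
    (integral_exp_pos (hexp x)).ne').differentiableAt

lemma fderiv_fderiv_vectorCGF_apply (hX : AEStronglyMeasurable X μ)
    (hexp : ∀ x, Integrable (fun ω => Real.exp ⟪x, X ω⟫) μ) (x v w : E) :
    fderiv ℝ (fun x => fderiv ℝ (vectorCGF X μ) x w) x v =
      cov[fun ω => ⟪v, X ω⟫, fun ω => ⟪w, X ω⟫; μ.tilted fun ω => ⟪x, X ω⟫] := by
  have hM := differentiable_integral_exp_inner hX hexp x
  have hMw := differentiable_integral_exp_inner_mul hX (integrable_exp_inner_mul_inner hX hexp w) x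
  have hM0 := (integral_exp_pos (hexp x)).ne'
  have := isProbabilityMeasure_tilted (hexp x)
  rw [covariance_eq_sub (memLp_two_inner_tilted hX hexp v x) (memLp_two_inner_tilted hX hexp w x)]
  simp only [fderiv_vectorCGF_apply hX hexp, integral_tilted_eq_div, Pi.mul_apply]
  rw [(hasFDerivAt_fun_div hMw.hasFDerivAt hM.hasFDerivAt hM0).fderiv]
  simp only [_root_.smul_apply, _root_.sub_apply, fderiv_integral_exp_inner_apply hX hexp,
    fderiv_integral_exp_inner_mul_apply hX (integrable_exp_inner_mul_inner hX hexp w)]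
  simp only [smul_eq_mul, mul_comm ⟪v, X _⟫]
  field_simp

end CGF

open scoped Matrix in
lemma posSemidef_covariance {ι : Type*} [Finite ι] {Y : ι → Ω → ℝ} [IsFiniteMeasure μ]
    (hY : ∀ i, MemLp (Y i) 2 μ) :
    (Matrix.of fun i j => cov[Y i, Y j; μ]).PosSemidef := by
  have := Fintype.ofFinite ι
  refine .of_dotProduct_mulVec_nonneg (Matrix.ext fun i j => covariance_comm _ _) fun a => ?_
  have hsmul : ∀ i, MemLp (a i • Y i) 2 μ := fun i => (hY i).const_smul (a i)
  have hquad : star a ⬝ᵥ (Matrix.of fun i j => cov[Y i, Y j; μ]) *ᵥ a =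
      Var[∑ i, a i • Y i; μ] := by
    rw [← covariance_self (memLp_finsetSum' _ fun i _ => hsmul i).aemeasurable,
      covariance_sum_sum hsmul hsmul]
    simp only [dotProduct, Matrix.mulVec, Matrix.of_apply, Finset.mul_sum, covariance_smul_left,
      covariance_smul_right, star_trivial]
    exact Finset.sum_congr rfl fun i _ => Finset.sum_congr rfl fun j _ => by ring
  exact hquad ▸ variance_nonneg _ _

end VectorCGF

section WithDensity

variable {α : Type*} {mα : MeasurableSpace α} {ν : Measure α} {w : α → ℝ}

lemma integral_withDensity_ofReal (hw : AEMeasurable w ν) (hw0 : ∀ x, 0 ≤ w x) (f : α → ℝ) :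
    ∫ x, f x ∂ν.withDensity (fun x => ENNReal.ofReal (w x)) = ∫ x, f x * w x ∂ν := by
  rw [integral_withDensity_eq_integral_toReal_smul₀ hw.ennreal_ofReal
    (ae_of_all _ fun _ => ENNReal.ofReal_lt_top)]
  simp only [ENNReal.toReal_ofReal (hw0 _), smul_eq_mul, mul_comm (w _)]

lemma integrable_withDensity_ofReal_iff (hw : AEMeasurable w ν) (hw0 : ∀ x, 0 ≤ w x)
    {f : α → ℝ} :
    Integrable f (ν.withDensity fun x => ENNReal.ofReal (w x)) ↔
      Integrable (fun x => f x * w x) ν := by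
  rw [integrable_withDensity_iff_integrable_smul₀' hw.ennreal_ofReal
    (ae_of_all _ fun _ => ENNReal.ofReal_lt_top)]
  simp only [ENNReal.toReal_ofReal (hw0 _), smul_eq_mul, mul_comm (w _)]

lemma neZero_withDensity_ofReal (hw : AEMeasurable w ν) (hw0 : ∀ x, 0 ≤ w x)
    (hne : ¬ w =ᵐ[ν] 0) : NeZero (ν.withDensity fun x => ENNReal.ofReal (w x)) := by
  refine ⟨fun h => hne ?_⟩
  filter_upwards [(withDensity_eq_zero_iff hw.ennreal_ofReal).1 h] with x hx
  exact le_antisymm (ENNReal.ofReal_eq_zero.1 hx) (hw0 x)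

end WithDensity

section ContinuousDensity

variable {α : Type*} [TopologicalSpace α] {mα : MeasurableSpace α} [OpensMeasurableSpace α]
  {ν : Measure α} {w : α → ℝ}

lemma neZero_withDensity_ofReal_of_continuous [ν.IsOpenPosMeasure] (hw : Continuous w)
    (hw0 : ∀ x, 0 ≤ w x) (hne : ∃ x, w x ≠ 0) :
    NeZero (ν.withDensity fun x => ENNReal.ofReal (w x)) := by
  obtain ⟨x, hx⟩ := hne
  exact neZero_withDensity_ofReal hw.aemeasurable hw0 fun h =>
    hx (congrFun ((hw.ae_eq_iff_eq ν continuous_zero).1 h) x)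

lemma integrable_withDensity_ofReal_of_hasCompactSupport [IsFiniteMeasureOnCompacts ν]
    (hw : Continuous w) (hw0 : ∀ x, 0 ≤ w x) (hsupp : HasCompactSupport w) {f : α → ℝ}
    (hf : Continuous f) : Integrable f (ν.withDensity fun x => ENNReal.ofReal (w x)) :=
  (integrable_withDensity_ofReal_iff hw.aemeasurable hw0).2
    ((hf.mul hw).integrable_of_hasCompactSupport hsupp.mul_left)

end ContinuousDensity

lemma hess_sub_mul_norm_sq {n : ℕ} {g : EuclideanSpace ℝ (Fin n) → ℝ}
    {i j : Fin n} {y : EuclideanSpace ℝ (Fin n)} (hg : Differentiable ℝ g)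
    (hgj : DifferentiableAt ℝ (pdv j g) y) (a : ℝ) :
    hess i j (fun x => g x - a * ‖x‖ ^ 2) y = hess i j g y - if i = j then 2 * a else 0 := by
  have hpdv : pdv j (fun x => g x - a * ‖x‖ ^ 2) = fun x => pdv j g x - 2 * a * x j := by
    funext x
    have hx := (hg x).hasFDerivAt.fun_sub
      ((hasStrictFDerivAt_norm_sq x).hasFDerivAt.const_mul a)
    simp only [pdv, hx.fderiv, _root_.sub_apply, _root_.smul_apply, coe_innerSL_apply,
      EuclideanSpace.inner_single_right, smul_eq_mul, nsmul_eq_mul, Nat.cast_ofNat, one_mul,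
      conj_trivial]
    ring
  have hcoord : HasFDerivAt (fun x : EuclideanSpace ℝ (Fin n) => 2 * a * x j)
      ((2 * a) • (EuclideanSpace.proj j : EuclideanSpace ℝ (Fin n) →L[ℝ] ℝ)) y :=
    (EuclideanSpace.proj j : EuclideanSpace ℝ (Fin n) →L[ℝ] ℝ).hasFDerivAt.const_mul (2 * a)
  rw [hess, hpdv, pdv, (hgj.hasFDerivAt.fun_sub hcoord).fderiv]
  simp [hess, pdv, eq_comm]

section Heat

open scoped RealInnerProductSpace

variable {n : ℕ} {t : ℝ} {ν : Measure (EuclideanSpace ℝ (Fin n))}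

lemma heatK_pos (ht : 0 < t) (x z : EuclideanSpace ℝ (Fin n)) : 0 < heatK n x z t := by
  unfold heatK
  positivity

lemma continuous_heatK (x : EuclideanSpace ℝ (Fin n)) (t : ℝ) :
    Continuous fun z => heatK n x z t := by
  unfold heatK
  fun_prop

lemma heatK_eq_exp_mul_exp_inner_mul_heatK_zero (x z : EuclideanSpace ℝ (Fin n)) (t : ℝ) :
    heatK n x z t = Real.exp (-((4 * t)⁻¹ * ‖x‖ ^ 2)) *
      (Real.exp ⟪x, (2 * t)⁻¹ • z⟫ * heatK n 0 z t) := by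
  have hexponent : -‖x - z‖ ^ 2 / (4 * t) =
      -((4 * t)⁻¹ * ‖x‖ ^ 2) + (-‖0 - z‖ ^ 2 / (4 * t) + ⟪x, (2 * t)⁻¹ • z⟫) := by
    rw [norm_sub_sq_real, zero_sub, norm_neg, real_inner_smul_right]
    ring
  rw [heatK, heatK, hexponent, Real.exp_add, Real.exp_add]
  ring

/-- The measure `K(0, z, t) dν(z)`. Its exponential tilts by linear functions of `z` are, up to
normalisation, the measures `K(x, z, t) dν(z)` that average the initial data `ν` around `x`. -/
noncomputable def heatWeighted (ν : Measure (EuclideanSpace ℝ (Fin n))) (t : ℝ) :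
    Measure (EuclideanSpace ℝ (Fin n)) :=
  ν.withDensity fun z => ENNReal.ofReal (heatK n 0 z t)

lemma neZero_heatWeighted [NeZero ν] (ht : 0 < t) : NeZero (heatWeighted ν t) := by
  refine neZero_withDensity_ofReal (continuous_heatK 0 t).aemeasurable
    (fun z => (heatK_pos ht 0 z).le) fun h => ?_
  refine NeZero.ne ν (ae_eq_bot.1 (eventually_false_iff_eq_bot.1 ?_))
  filter_upwards [h] with z hz using (heatK_pos ht 0 z).ne' hz

lemma integrable_exp_inner_heatWeighted (ht : 0 < t)
    (hν : ∀ x, Integrable (fun z => heatK n x z t) ν) (x : EuclideanSpace ℝ (Fin n)) :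
    Integrable (fun z => Real.exp ⟪x, (2 * t)⁻¹ • z⟫) (heatWeighted ν t) := by
  rw [heatWeighted, integrable_withDensity_ofReal_iff (continuous_heatK 0 t).aemeasurable
    fun z => (heatK_pos ht 0 z).le]
  have hx := hν x
  rw [funext fun z => heatK_eq_exp_mul_exp_inner_mul_heatK_zero x z t] at hx
  exact (integrable_const_mul_iff (Real.exp_pos _).ne'.isUnit _).1 hx

lemma log_integral_heatK [NeZero ν] (ht : 0 < t)
    (hν : ∀ x, Integrable (fun z => heatK n x z t) ν) (x : EuclideanSpace ℝ (Fin n)) :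
    Real.log (∫ z, heatK n x z t ∂ν) =
      vectorCGF (fun z => (2 * t)⁻¹ • z) (heatWeighted ν t) x - (4 * t)⁻¹ * ‖x‖ ^ 2 := by
  have := neZero_heatWeighted (ν := ν) ht
  have hpos := integral_exp_pos (integrable_exp_inner_heatWeighted ht hν x)
  have hfactor : ∫ z, heatK n x z t ∂ν = Real.exp (-((4 * t)⁻¹ * ‖x‖ ^ 2)) *
      ∫ z, Real.exp ⟪x, (2 * t)⁻¹ • z⟫ ∂heatWeighted ν t := by
    rw [heatWeighted, integral_withDensity_ofReal (continuous_heatK 0 t).aemeasurable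
      (fun z => (heatK_pos ht 0 z).le), ← integral_const_mul]
    exact integral_congr_ae (ae_of_all _ fun z => heatK_eq_exp_mul_exp_inner_mul_heatK_zero x z t)
  rw [hfactor, Real.log_mul (Real.exp_pos _).ne' hpos.ne', Real.log_exp, vectorCGF]
  ring

end Heat

section General

open ProbabilityTheory
open scoped RealInnerProductSpace

theorem stmt16_general (n : ℕ) (ν : Measure (EuclideanSpace ℝ (Fin n))) [NeZero ν]
    (u : EuclideanSpace ℝ (Fin n) → ℝ → ℝ) (hu : ∀ y t, u y t = ∫ z, heatK n y z t ∂ν)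
    (y : EuclideanSpace ℝ (Fin n)) (t : ℝ) (ht : 0 < t)
    (hν : ∀ x, Integrable (fun z => heatK n x z t) ν) :
    (Matrix.of fun i j : Fin n =>
      hess i j (fun z => Real.log (u z t)) y
        + (if i = j then 1 / (2 * t) else 0)).PosSemidef := by
  let X : EuclideanSpace ℝ (Fin n) → EuclideanSpace ℝ (Fin n) := fun z => (2 * t)⁻¹ • z
  let e : Fin n → EuclideanSpace ℝ (Fin n) := fun i => EuclideanSpace.single i 1
  let μ := heatWeighted ν t
  have := neZero_heatWeighted (ν := ν) ht
  have hX : AEStronglyMeasurable X μ := by fun_prop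
  have hexp := integrable_exp_inner_heatWeighted ht hν
  have := isProbabilityMeasure_tilted (hexp y)
  have hcov (i j : Fin n) :
      hess i j (fun z => Real.log (u z t)) y + (if i = j then 1 / (2 * t) else 0) =
        cov[fun z => ⟪e i, X z⟫, fun z => ⟪e j, X z⟫; μ.tilted fun z => ⟪y, X z⟫] := by
    have hhess : hess i j (vectorCGF X μ) y =
        cov[fun z => ⟪e i, X z⟫, fun z => ⟪e j, X z⟫; μ.tilted fun z => ⟪y, X z⟫] :=
      fderiv_fderiv_vectorCGF_apply hX hexp y (e i) (e j)
    have hcoeff : 2 * (4 * t)⁻¹ = 1 / (2 * t) := by field_simp; norm_num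
    simp only [hu, log_integral_heatK ht hν]
    rw [hess_sub_mul_norm_sq (differentiable_vectorCGF hX hexp)
      (differentiable_fderiv_vectorCGF_apply hX hexp (e j) y), hhess, hcoeff, sub_add_cancel]
  simp only [hcov]
  exact posSemidef_covariance fun i => memLp_two_inner_tilted hX hexp (e i) y

end General

/-- Matrix Li–Yau–Hamilton inequality on flat ℝⁿ: for the positive solution `u`
of the heat equation with initial data `u₀`, the symmetric matrix
`∇² log u + (1/(2t)) I` is positive semidefinite for every `t > 0`. -/
theorem stmt16 (n : ℕ) (hn : 1 ≤ n)
    (u₀ : EuclideanSpace ℝ (Fin n) → ℝ) (hc : Continuous u₀)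
    (hsupp : HasCompactSupport u₀) (hnn : ∀ z, 0 ≤ u₀ z) (hne : ∃ z, u₀ z ≠ 0)
    (u : EuclideanSpace ℝ (Fin n) → ℝ → ℝ)
    (hu : ∀ y t, u y t = ∫ z, heatK n y z t * u₀ z) :
    ∀ (y : EuclideanSpace ℝ (Fin n)) (t : ℝ), 0 < t →
      (Matrix.of fun i j : Fin n =>
        hess i j (fun z => Real.log (u z t)) y
          + (if i = j then 1 / (2 * t) else 0)).PosSemidef := by
  have := neZero_withDensity_ofReal_of_continuous (ν := volume) hc hnn hne
  exact fun y t ht => stmt16_general n _ u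
    (fun x s => (hu x s).trans (integral_withDensity_ofReal hc.aemeasurable hnn _).symm) y t ht
    fun x => integrable_withDensity_ofReal_of_hasCompactSupport hc hnn hsupp (continuous_heatK x t)
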